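/- The function B(t) = −t² φ0(i/t) + (36/π²) ψ_I(it) satisfies B(t) > 0 for every real t ∈ (0, ∞). (Here φ0(i/t) and ψ_I(it) are real, so B is real-valued.) -/

import Mathlib

open MeasureTheory

/-- Weight 2 Eisenstein series (quasimodular), via its `q`-expansion. -/
noncomputable def E2 (z : ℂ) : ℂ :=
  1 - 24 * ∑' n : ℕ+, ((ArithmeticFunction.sigma 1 n : ℕ) : ℂ) *
    Complex.exp (2 * (Real.pi : ℂ) * Complex.I * n * z)

/-- Weight 4 Eisenstein series, via its `q`-expansion. -/
noncomputable def E4 (z : ℂ) : ℂ :=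
  1 + 240 * ∑' n : ℕ+, ((ArithmeticFunction.sigma 3 n : ℕ) : ℂ) *
    Complex.exp (2 * (Real.pi : ℂ) * Complex.I * n * z)

/-- Weight 6 Eisenstein series, via its `q`-expansion. -/
noncomputable def E6 (z : ℂ) : ℂ :=
  1 - 504 * ∑' n : ℕ+, ((ArithmeticFunction.sigma 5 n : ℕ) : ℂ) *
    Complex.exp (2 * (Real.pi : ℂ) * Complex.I * n * z)

/-- The elliptic `j`-invariant. -/
noncomputable def jInv (z : ℂ) : ℂ := 1728 * E4 z ^ 3 / (E4 z ^ 3 - E6 z ^ 2)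

/-- The weakly holomorphic modular form `varphi_{-2}`. -/
noncomputable def varphim2 (z : ℂ) : ℂ := -1728 * E4 z * E6 z / (E4 z ^ 3 - E6 z ^ 2)

/-- The weakly holomorphic modular form `varphi_{-4}`. -/
noncomputable def varphim4 (z : ℂ) : ℂ := 1728 * E4 z ^ 2 / (E4 z ^ 3 - E6 z ^ 2)

/-- `φ_{-4} = varphi_{-4}`. -/
noncomputable def phim4 (z : ℂ) : ℂ := varphim4 z

/-- `φ_{-2} = varphi_{-4}·E2 + varphi_{-2}`. -/
noncomputable def phim2 (z : ℂ) : ℂ := varphim4 z * E2 z + varphim2 z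

/-- `φ_0 = varphi_{-4}·E2² + 2·varphi_{-2}·E2 + j − 1728`. -/
noncomputable def phi0 (z : ℂ) : ℂ :=
  varphim4 z * E2 z ^ 2 + 2 * varphim2 z * E2 z + jInv z - 1728
/-- The theta constant `θ00`. -/
noncomputable def theta00 (z : ℂ) : ℂ :=
  ∑' n : ℤ, Complex.exp ((Real.pi : ℂ) * Complex.I * (n : ℂ) ^ 2 * z)

/-- The theta constant `θ01`. -/
noncomputable def theta01 (z : ℂ) : ℂ :=
  ∑' n : ℤ, (-1 : ℂ) ^ n * Complex.exp ((Real.pi : ℂ) * Complex.I * (n : ℂ) ^ 2 * z)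

/-- The theta constant `θ10`. -/
noncomputable def theta10 (z : ℂ) : ℂ :=
  ∑' n : ℤ, Complex.exp ((Real.pi : ℂ) * Complex.I * ((n : ℂ) + 1/2) ^ 2 * z)

/-- `ψ_I = 128(θ00⁴+θ01⁴)/θ10⁸ + 128(θ01⁴−θ10⁴)/θ00⁸`. -/
noncomputable def psiI (z : ℂ) : ℂ :=
  128 * (theta00 z ^ 4 + theta01 z ^ 4) / theta10 z ^ 8 +
    128 * (theta01 z ^ 4 - theta10 z ^ 4) / theta00 z ^ 8

/-- `ψ_T = 128(θ00⁴+θ01⁴)/θ10⁸ + 128(θ00⁴+θ10⁴)/θ01⁸`. -/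
noncomputable def psiT (z : ℂ) : ℂ :=
  128 * (theta00 z ^ 4 + theta01 z ^ 4) / theta10 z ^ 8 +
    128 * (theta00 z ^ 4 + theta10 z ^ 4) / theta01 z ^ 8

/-- `ψ_S = −128(θ00⁴+θ10⁴)/θ01⁸ − 128(θ10⁴−θ01⁴)/θ00⁸`. -/
noncomputable def psiS (z : ℂ) : ℂ :=
  -128 * (theta00 z ^ 4 + theta10 z ^ 4) / theta01 z ^ 8 -
    128 * (theta10 z ^ 4 - theta01 z ^ 4) / theta00 z ^ 8

/-- `B(t) = −t²φ₀(i/t) + (36/π²)ψ_I(it)`. -/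
noncomputable def Bfn (t : ℝ) : ℂ :=
  -(t : ℂ) ^ 2 * phi0 (Complex.I / (t : ℂ)) + (36 / (Real.pi : ℂ) ^ 2) * psiI (Complex.I * (t : ℂ))

/-!
The inversion `z ↦ -1/z` turns `t²φ₀(i/t)` into `(36/π²) 1728 (E4 - (π/6) t K)² / (E4³ - E6²)`
evaluated at `it`, where `K = E2 E4 - E6`, and `ψ_I(i/s)` into `-s⁻² ψ_S(is)`. So for `t ≥ 1`, and
for `t ≤ 1` with `s = 1/t`, everything is evaluated at a point of the imaginary axis where the nome
`p = exp(πiz)` is at most `1/20`, and the leading terms in `p` and `q = p²` decide the sign.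

For `t ≥ 1` both `ψ_I(it)` and `(π²/36) t²φ₀(i/t)` have leading term `1/q`, so the poles cancel in
`B`; what remains is positive because `E4 - (π/6) t K` lies below `1` by a multiple of `q` large
enough to dominate all other terms. For `t ≤ 1`, `-ψ_S` is of order `p` while `K² / (E4³ - E6²)` is
only of order `q`.
-/

section

open Complex
open UpperHalfPlane hiding I
open scoped Real MatrixGroups ArithmeticFunction.sigma

/-! ### Eisenstein series -/

theorem tsum_sigma_mul_cexp (k : ℕ) (z : ℂ) :
    ∑' n : ℕ+, (σ k n : ℂ) * cexp (2 * π * I * n * z) =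
      ∑' n : ℕ+, (σ k n : ℂ) * cexp (2 * π * I * z) ^ (n : ℕ) := by
  refine tsum_congr fun n ↦ ?_
  rw [← Complex.exp_nat_mul]
  ring_nf

theorem E2_coe (z : ℍ) : E2 z = EisensteinSeries.E2 z := by
  rw [EisensteinSeries.E2_eq_tsum_cexp, E2, tsum_sigma_mul_cexp]

theorem E4_coe (z : ℍ) : E4 z = ModularForm.E₄ z := by
  have h := EisensteinSeries.q_expansion_bernoulli (k := 4) (by norm_num) (by decide) z
  rw [show bernoulli 4 = -1 / 30 by decide +kernel] at h
  rw [h, E4, tsum_sigma_mul_cexp]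
  norm_num

theorem E6_coe (z : ℍ) : E6 z = ModularForm.E₆ z := by
  have h := EisensteinSeries.q_expansion_bernoulli (k := 6) (by norm_num) (by decide) z
  rw [show bernoulli 6 = 1 / 42 by decide +kernel] at h
  rw [h, E6, tsum_sigma_mul_cexp]
  norm_num [sub_eq_add_neg]

theorem E4_cube_sub_E6_sq_ne_zero {z : ℂ} (hz : 0 < z.im) : E4 z ^ 3 - E6 z ^ 2 ≠ 0 := by
  lift z to ℍ using hz
  have h := ModularForm.discriminant_ne_zero z
  rw [ModularForm.discriminant_eq_E₄_cube_sub_E₆_sq, ← E4_coe, ← E6_coe] at h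
  exact fun h0 ↦ h (by rw [h0, zero_div])

theorem coe_modular_S_smul (z : ℍ) : ((ModularGroup.S • z : ℍ) : ℂ) = -1 / z := by
  rw [modular_S_smul, coe_mk, inv_neg, neg_div, one_div]

theorem slashInvariant_modular_S_smul {F : Type*} [FunLike F ℍ ℂ] {k : ℤ}
    [SlashInvariantFormClass F 𝒮ℒ k] (f : F) (z : ℍ) :
    f (ModularGroup.S • z) = (z : ℂ) ^ k * f z := by
  have h : f (ModularGroup.S • z) = denom ModularGroup.S z ^ k * f z :=
    SlashInvariantForm.slash_action_eqn'' (Γ := 𝒮ℒ) f ⟨ModularGroup.S, rfl⟩ z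
  rwa [ModularGroup.denom_S] at h

theorem E4_neg_inv {z : ℂ} (hz : 0 < z.im) : E4 (-1 / z) = z ^ 4 * E4 z := by
  lift z to ℍ using hz
  rw [← coe_modular_S_smul, E4_coe, E4_coe, slashInvariant_modular_S_smul]
  rfl

theorem E6_neg_inv {z : ℂ} (hz : 0 < z.im) : E6 (-1 / z) = z ^ 6 * E6 z := by
  lift z to ℍ using hz
  rw [← coe_modular_S_smul, E6_coe, E6_coe, slashInvariant_modular_S_smul]
  rfl

theorem E2_neg_inv {z : ℂ} (hz : 0 < z.im) :
    E2 (-1 / z) = z ^ 2 * E2 z + 6 * z / (π * I) := by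
  lift z to ℍ using hz
  have hz0 := ne_zero z
  have hπ : (π : ℂ) ≠ 0 := ofReal_ne_zero.mpr Real.pi_ne_zero
  rw [← coe_modular_S_smul, E2_coe, E2_coe]
  simp only [EisensteinSeries.E2, Pi.smul_apply, smul_eq_mul]
  rw [EisensteinSeries.G2_S_transform z, riemannZeta_two]
  field_simp
  linear_combination (-2 * π * z : ℂ) * I_sq

theorem phi0_eq {z : ℂ} (hz : 0 < z.im) :
    phi0 z = 1728 * (E2 z * E4 z - E6 z) ^ 2 / (E4 z ^ 3 - E6 z ^ 2) := by
  have hD := E4_cube_sub_E6_sq_ne_zero hz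
  rw [phi0, varphim4, varphim2, jInv]
  field_simp
  ring

theorem im_neg_one_div_pos {z : ℂ} (hz : 0 < z.im) : 0 < (-1 / z).im := by
  lift z to ℍ using hz
  rw [← coe_modular_S_smul]
  exact im_pos _

theorem sq_mul_phi0_neg_inv {z : ℂ} (hz : 0 < z.im) :
    z ^ 2 * phi0 (-1 / z) =
      1728 * (6 / (π * I) * E4 z + z * (E2 z * E4 z - E6 z)) ^ 2 / (E4 z ^ 3 - E6 z ^ 2) := by
  have hz0 : z ≠ 0 := by rintro rfl; exact hz.ne' rfl
  have hD := E4_cube_sub_E6_sq_ne_zero hz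
  have hD' : (z ^ 4 * E4 z) ^ 3 - (z ^ 6 * E6 z) ^ 2 = z ^ 12 * (E4 z ^ 3 - E6 z ^ 2) := by ring
  rw [phi0_eq (im_neg_one_div_pos hz), E2_neg_inv hz, E4_neg_inv hz, E6_neg_inv hz, hD']
  field_simp
  ring

end

section

open Complex
open scoped Real

/-! ### Theta constants -/

theorem theta00_eq_jacobiTheta₂ (z : ℂ) : theta00 z = jacobiTheta₂ 0 z := by
  refine tsum_congr fun n ↦ ?_
  simp [jacobiTheta₂_term]

theorem theta01_eq_jacobiTheta₂ (z : ℂ) : theta01 z = jacobiTheta₂ (1 / 2) z := by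
  refine tsum_congr fun n ↦ ?_
  rw [jacobiTheta₂_term, Complex.exp_add,
    show 2 * (π : ℂ) * I * n * (1 / 2) = n * (π * I) by ring, exp_int_mul, exp_pi_mul_I]

theorem theta10_eq_jacobiTheta₂ (z : ℂ) :
    theta10 z = cexp (π * I * z / 4) * jacobiTheta₂ (z / 2) z := by
  rw [theta10, jacobiTheta₂, ← tsum_mul_left]
  refine tsum_congr fun n ↦ ?_
  rw [jacobiTheta₂_term, ← Complex.exp_add]
  ring_nf

theorem neg_I_mul_cpow_half_pow_four (z : ℂ) : ((-I * z) ^ (1 / 2 : ℂ)) ^ 4 = -z ^ 2 := by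
  rw [← cpow_nat_mul, show ((4 : ℕ) : ℂ) * (1 / 2) = (2 : ℕ) by norm_num, cpow_natCast, mul_pow,
    neg_sq, I_sq, neg_one_mul]

theorem theta00_neg_inv {z : ℂ} (hz : z ≠ 0) :
    theta00 (-1 / z) = (-I * z) ^ (1 / 2 : ℂ) * theta00 z := by
  have h := jacobiTheta₂_functional_equation 0 z
  rw [theta00_eq_jacobiTheta₂, theta00_eq_jacobiTheta₂, h]
  simp [field]

theorem theta01_neg_inv {z : ℂ} (hz : z ≠ 0) :
    theta01 (-1 / z) = (-I * z) ^ (1 / 2 : ℂ) * theta10 z := by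
  have h := jacobiTheta₂_functional_equation (z / 2) z
  rw [show z / 2 / z = 1 / 2 by field_simp,
    show -π * I * (z / 2) ^ 2 / z = -(π * I * z / 4) by field_simp; ring, Complex.exp_neg] at h
  rw [theta10_eq_jacobiTheta₂, theta01_eq_jacobiTheta₂, h]
  field_simp

theorem theta10_neg_inv {z : ℂ} (hz : z ≠ 0) :
    theta10 (-1 / z) = (-I * z) ^ (1 / 2 : ℂ) * theta01 z := by
  have h := jacobiTheta₂_functional_equation (1 / 2) z
  rw [show 1 / 2 / z = -(-1 / z / 2) by ring, jacobiTheta₂_neg_left,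
    show -π * I * (1 / 2) ^ 2 / z = π * I * (-1 / z) / 4 by ring] at h
  rw [theta10_eq_jacobiTheta₂, theta01_eq_jacobiTheta₂, h]
  field_simp

theorem psiI_neg_inv {z : ℂ} (hz : z ≠ 0) : psiI (-1 / z) = (z ^ 2)⁻¹ * psiS z := by
  have pow_eight (w : ℂ) : w ^ 8 = (w ^ 4) ^ 2 := by ring
  simp only [psiI, psiS, pow_eight, theta00_neg_inv hz, theta01_neg_inv hz, theta10_neg_inv hz,
    mul_pow, neg_I_mul_cpow_half_pow_four]
  field_simp
  ring

end

section

open Complex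
open scoped Real ArithmeticFunction.sigma

/-! ### Restriction to the imaginary axis -/

/-- The nome `p = exp(πiz)` at `z = it`; the elliptic nome squared is the variable `q = exp(2πiz)`
of the Eisenstein series. -/
noncomputable def nome (t : ℝ) : ℝ := Real.exp (-π * t)

/-- The Lambert-type series `∑ σ_k(n) qⁿ` over `n ≥ 1`, the nonconstant part of an Eisenstein
series, as a function of a real variable. -/
noncomputable def sigmaSeries (k : ℕ) (q : ℝ) : ℝ := ∑' n : ℕ+, (σ k n : ℝ) * q ^ (n : ℕ)

/-- `E2` as a real function of `q = exp(2πiz)`. -/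
noncomputable def qE2 (q : ℝ) : ℝ := 1 - 24 * sigmaSeries 1 q

/-- `E4` as a real function of `q = exp(2πiz)`. -/
noncomputable def qE4 (q : ℝ) : ℝ := 1 + 240 * sigmaSeries 3 q

/-- `E6` as a real function of `q = exp(2πiz)`. -/
noncomputable def qE6 (q : ℝ) : ℝ := 1 - 504 * sigmaSeries 5 q

/-- `E2 * E4 - E6` as a real function of `q = exp(2πiz)`; by Ramanujan's identity this is three
times the derivative `q dE4/dq`, so it vanishes to first order at `q = 0`. -/
noncomputable def qRamanujan (q : ℝ) : ℝ := qE2 q * qE4 q - qE6 q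

/-- `E4 ^ 3 - E6 ^ 2`, that is `1728` times the modular discriminant, as a real function of
`q = exp(2πiz)`. -/
noncomputable def qDisc (q : ℝ) : ℝ := qE4 q ^ 3 - qE6 q ^ 2

/-- Ramanujan's theta function `φ(x) = ∑ x ^ n²` over all integers `n`. In terms of the nome `p`
one has `θ00 = φ(p)` and `θ01 = φ(-p)`. -/
noncomputable def ramanujanPhi (x : ℝ) : ℝ := ∑' n : ℤ, x ^ n.natAbs ^ 2

/-- The theta series `∑ x ^ (n (n + 1))` over `n ≥ 0`, which is Ramanujan's `ψ(x²)`. In terms of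
the nome `p` one has `θ10 = 2 p^(1/4) ψ(p²)`. -/
noncomputable def oblongTheta (x : ℝ) : ℝ := ∑' n : ℕ, x ^ (n * (n + 1))

/-- `ψ_I` as a real function of the nome; here `16 p ψ(p²)⁴` stands for `θ10⁴`. -/
noncomputable def nomePsiI (p : ℝ) : ℝ :=
  128 * (ramanujanPhi p ^ 4 + ramanujanPhi (-p) ^ 4) / (16 * p * oblongTheta p ^ 4) ^ 2 +
    128 * (ramanujanPhi (-p) ^ 4 - 16 * p * oblongTheta p ^ 4) / ramanujanPhi p ^ 8

/-- `ψ_S` as a real function of the nome; here `16 p ψ(p²)⁴` stands for `θ10⁴`. -/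
noncomputable def nomePsiS (p : ℝ) : ℝ :=
  -128 * (ramanujanPhi p ^ 4 + 16 * p * oblongTheta p ^ 4) / ramanujanPhi (-p) ^ 8 -
    128 * (16 * p * oblongTheta p ^ 4 - ramanujanPhi (-p) ^ 4) / ramanujanPhi p ^ 8

theorem nome_pos (t : ℝ) : 0 < nome t := Real.exp_pos _

theorem nome_lt_one {t : ℝ} (ht : 0 < t) : nome t < 1 :=
  Real.exp_lt_one_iff.mpr (by nlinarith [Real.pi_pos])

theorem cexp_two_pi_I_mul_axis (t : ℝ) : cexp (2 * π * I * (I * t)) = (nome t ^ 2 : ℝ) := by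
  rw [nome, ← Real.exp_nat_mul, ofReal_exp]
  congr 1
  push_cast
  linear_combination (2 * π * t : ℂ) * I_sq

theorem tsum_sigma_mul_cexp_axis (k : ℕ) (t : ℝ) :
    ∑' n : ℕ+, (σ k n : ℂ) * cexp (2 * π * I * n * (I * t)) = sigmaSeries k (nome t ^ 2) := by
  rw [tsum_sigma_mul_cexp, cexp_two_pi_I_mul_axis, sigmaSeries]
  push_cast
  rfl

theorem E2_axis (t : ℝ) : E2 (I * t) = qE2 (nome t ^ 2) := by
  rw [E2, tsum_sigma_mul_cexp_axis, qE2]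
  push_cast
  rfl

theorem E4_axis (t : ℝ) : E4 (I * t) = qE4 (nome t ^ 2) := by
  rw [E4, tsum_sigma_mul_cexp_axis, qE4]
  push_cast
  rfl

theorem E6_axis (t : ℝ) : E6 (I * t) = qE6 (nome t ^ 2) := by
  rw [E6, tsum_sigma_mul_cexp_axis, qE6]
  push_cast
  rfl

theorem cexp_pi_I_mul_axis (t : ℝ) (n : ℤ) :
    cexp (π * I * (n : ℂ) ^ 2 * (I * t)) = (nome t ^ n.natAbs ^ 2 : ℝ) := by
  have natAbs_sq : ((n.natAbs : ℕ) : ℂ) ^ 2 = n ^ 2 := by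
    rw [Nat.cast_natAbs, ← Int.cast_pow, sq_abs, Int.cast_pow]
  rw [nome, ← Real.exp_nat_mul, ofReal_exp]
  congr 1
  push_cast
  rw [natAbs_sq]
  linear_combination (π * (n : ℂ) ^ 2 * t) * I_sq

theorem theta00_axis (t : ℝ) : theta00 (I * t) = ramanujanPhi (nome t) := by
  rw [theta00, ramanujanPhi, ofReal_tsum]
  exact tsum_congr (cexp_pi_I_mul_axis t)

theorem theta01_axis (t : ℝ) : theta01 (I * t) = ramanujanPhi (-nome t) := by
  rw [theta01, ramanujanPhi, ofReal_tsum]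
  refine tsum_congr fun n ↦ ?_
  have neg_one_zpow : (-1 : ℂ) ^ n = (-1) ^ n.natAbs ^ 2 := by
    rcases n.even_or_odd with h | h
    · rw [h.neg_one_zpow, (h.natAbs.pow_of_ne_zero two_ne_zero).neg_one_pow]
    · rw [h.neg_one_zpow, h.natAbs.pow.neg_one_pow]
  rw [cexp_pi_I_mul_axis, neg_pow (nome t), neg_one_zpow]
  push_cast
  rfl

theorem summable_pow_oblong {x : ℝ} (hx0 : 0 ≤ x) (hx1 : x < 1) :
    Summable fun n : ℕ ↦ x ^ (n * (n + 1)) :=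
  (summable_geometric_of_lt_one hx0 hx1).of_nonneg_of_le (fun _ ↦ by positivity)
    fun n ↦ pow_le_pow_of_le_one hx0 hx1.le (by nlinarith)

theorem theta10_axis {t : ℝ} (ht : 0 < t) :
    theta10 (I * t) = (2 * Real.exp (-π * t / 4) * oblongTheta (nome t) : ℝ) := by
  have term_natCast (n : ℕ) : cexp (π * I * (((n : ℤ) : ℂ) + 1 / 2) ^ 2 * (I * t)) =
      (Real.exp (-π * t / 4) * nome t ^ (n * (n + 1)) : ℝ) := by
    rw [nome, ← Real.exp_nat_mul, ← Real.exp_add, ofReal_exp]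
    congr 1
    push_cast
    linear_combination (π * ((n : ℂ) + 1 / 2) ^ 2 * t) * I_sq
  have term_neg (n : ℕ) : cexp (π * I * (((-(n + 1) : ℤ) : ℂ) + 1 / 2) ^ 2 * (I * t)) =
      (Real.exp (-π * t / 4) * nome t ^ (n * (n + 1)) : ℝ) := by
    rw [← term_natCast]
    congr 1
    push_cast
    ring
  have hsum : Summable fun n : ℕ ↦
      ((Real.exp (-π * t / 4) * nome t ^ (n * (n + 1)) : ℝ) : ℂ) :=
    summable_ofReal.mpr ((summable_pow_oblong (nome_pos t).le (nome_lt_one ht)).mul_left _)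
  rw [theta10, tsum_of_nat_of_neg_add_one (by simpa only [term_natCast] using hsum)
    (by simpa only [term_neg] using hsum)]
  simp only [term_natCast, term_neg]
  rw [← ofReal_tsum, tsum_mul_left, oblongTheta]
  push_cast
  ring

theorem theta10_axis_pow_four {t : ℝ} (ht : 0 < t) :
    theta10 (I * t) ^ 4 = (16 * nome t * oblongTheta (nome t) ^ 4 : ℝ) := by
  have exp_pow : Real.exp (-π * t / 4) ^ 4 = nome t := by
    rw [nome, ← Real.exp_nat_mul]
    congr 1
    push_cast
    ring
  rw [theta10_axis ht, ← exp_pow]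
  push_cast
  ring

theorem psiI_axis {t : ℝ} (ht : 0 < t) : psiI (I * t) = nomePsiI (nome t) := by
  rw [psiI, show theta10 (I * t) ^ 8 = (theta10 (I * t) ^ 4) ^ 2 by ring,
    theta10_axis_pow_four ht, theta00_axis, theta01_axis, nomePsiI]
  push_cast
  rfl

theorem psiS_axis {t : ℝ} (ht : 0 < t) : psiS (I * t) = nomePsiS (nome t) := by
  rw [psiS, theta10_axis_pow_four ht, theta00_axis, theta01_axis, nomePsiS]
  push_cast
  rfl

theorem neg_one_div_axis (t : ℝ) : -1 / (I * t : ℂ) = I / t := by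
  rw [← div_div, neg_div, one_div, inv_I, neg_neg]

theorem Bfn_eq_ofReal {t : ℝ} (ht : 0 < t) :
    Bfn t = (36 / π ^ 2 * (nomePsiI (nome t) - 1728 *
      (qE4 (nome t ^ 2) - π / 6 * t * qRamanujan (nome t ^ 2)) ^ 2 / qDisc (nome t ^ 2)) : ℝ) := by
  have him : 0 < (I * t : ℂ).im := by simpa using ht
  have hB : Bfn t = (I * t) ^ 2 * phi0 (-1 / (I * t)) + 36 / π ^ 2 * psiI (I * t) := by
    rw [Bfn, neg_one_div_axis, mul_pow, I_sq, neg_one_mul]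
  rw [hB, sq_mul_phi0_neg_inv him, psiI_axis ht, E2_axis, E4_axis, E6_axis, qRamanujan, qDisc]
  push_cast
  have hπ : (π : ℂ) ≠ 0 := ofReal_ne_zero.mpr Real.pi_ne_zero
  rw [show (6 / (π * I) : ℂ) = -(6 * I / π) by rw [← div_div, div_I]; ring]
  field_simp
  rw [I_sq]
  ring

theorem Bfn_one_div_eq_ofReal {t : ℝ} (ht : 0 < t) :
    Bfn (1 / t) = ((-36 / π ^ 2 * nomePsiS (nome t) -
      1728 * qRamanujan (nome t ^ 2) ^ 2 / qDisc (nome t ^ 2)) / t ^ 2 : ℝ) := by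
  have him : 0 < (I * t : ℂ).im := by simpa using ht
  have ht0 : (t : ℂ) ≠ 0 := ofReal_ne_zero.mpr ht.ne'
  have hB : Bfn (1 / t) = -(1 / t ^ 2) * phi0 (I * t) + 36 / π ^ 2 * psiI (-1 / (I * t)) := by
    rw [Bfn, neg_one_div_axis]
    push_cast
    rw [div_div_eq_mul_div, div_one, mul_one_div, one_div_pow]
  rw [hB, psiI_neg_inv (mul_ne_zero I_ne_zero ht0), phi0_eq him, psiS_axis ht, E2_axis, E4_axis,
    E6_axis, qRamanujan, qDisc, mul_pow, I_sq]
  push_cast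
  field_simp
  ring

end

section

open Finset
open scoped ArithmeticFunction.sigma

/-! ### Bounds for the `q`-series -/

theorem sigma_add_one_le (k n : ℕ) : σ k (n + 1) ≤ (2 ^ (k + 1)) ^ n :=
  calc
    σ k (n + 1) ≤ (n + 1) ^ (k + 1) := ArithmeticFunction.sigma_le_pow_succ k (n + 1)
    _ ≤ (2 ^ n) ^ (k + 1) := Nat.pow_le_pow_left Nat.lt_two_pow_self _
    _ = (2 ^ (k + 1)) ^ n := by rw [← pow_mul, ← pow_mul, mul_comm]

theorem sigma_two (k : ℕ) : σ k 2 = 1 + 2 ^ k := by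
  rw [ArithmeticFunction.sigma_apply, Nat.prime_two.sum_divisors, one_pow, add_comm]

theorem norm_sigma_mul_pow_le (k n : ℕ) {q : ℝ} (hq : 0 ≤ q) :
    ‖(σ k (n + 1) : ℝ) * q ^ (n + 1)‖ ≤ q * (2 ^ (k + 1) * q) ^ n := by
  have hσ : (σ k (n + 1) : ℝ) ≤ (2 ^ (k + 1)) ^ n := mod_cast sigma_add_one_le k n
  calc
    ‖(σ k (n + 1) : ℝ) * q ^ (n + 1)‖ = σ k (n + 1) * q ^ (n + 1) :=
      Real.norm_of_nonneg (by positivity)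
    _ ≤ (2 ^ (k + 1)) ^ n * q ^ (n + 1) := by gcongr
    _ = q * (2 ^ (k + 1) * q) ^ n := by ring

theorem hasSum_sigmaSeries (k : ℕ) {q : ℝ} (hq0 : 0 ≤ q) (hq1 : 2 ^ (k + 1) * q < 1) :
    HasSum (fun n : ℕ ↦ (σ k (n + 1) : ℝ) * q ^ (n + 1)) (sigmaSeries k q) := by
  rw [sigmaSeries, tsum_pnat_eq_tsum_succ (f := fun n ↦ (σ k n : ℝ) * q ^ n)]
  exact (Summable.of_norm_bounded
    ((summable_geometric_of_lt_one (by positivity) hq1).mul_left q)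
    fun n ↦ norm_sigma_mul_pow_le k n hq0).hasSum

theorem sigmaSeries_lower_bound (k : ℕ) {q : ℝ} (hq0 : 0 ≤ q) (hq1 : 2 ^ (k + 1) * q < 1) :
    q + (1 + 2 ^ k) * q ^ 2 ≤ sigmaSeries k q := by
  have h := sum_le_hasSum (range 2) (fun n _ ↦ by positivity) (hasSum_sigmaSeries k hq0 hq1)
  simpa [sum_range_succ, sigma_two] using h

theorem sigmaSeries_upper_bound (k : ℕ) {q : ℝ} (hq0 : 0 ≤ q) (hq1 : 2 ^ (k + 1) * q < 1) :
    sigmaSeries k q ≤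
      q + (1 + 2 ^ k) * q ^ 2 + q * (2 ^ (k + 1) * q) ^ 2 / (1 - 2 ^ (k + 1) * q) := by
  have h := norm_sub_le_of_geometric_bound_of_hasSum hq1
    (fun n ↦ norm_sigma_mul_pow_le k n hq0) (hasSum_sigmaSeries k hq0 hq1) 2
  have h' : |q + (1 + 2 ^ k) * q ^ 2 - sigmaSeries k q| ≤
      q * (2 ^ (k + 1) * q) ^ 2 / (1 - 2 ^ (k + 1) * q) := by
    simpa [sum_range_succ, sigma_two] using h
  linarith [(abs_le.mp h').1]

theorem hasSum_ramanujanPhi {x : ℝ} (hx : |x| < 1) :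
    HasSum (fun n : ℕ ↦ 2 * x ^ (n + 1) ^ 2) (ramanujanPhi x - 1) := by
  have hs : Summable fun n : ℕ ↦ x ^ n ^ 2 :=
    Summable.of_norm_bounded (summable_geometric_of_lt_one (abs_nonneg x) hx) fun n ↦ by
      rw [norm_pow, Real.norm_eq_abs]
      exact pow_le_pow_of_le_one (abs_nonneg x) hx.le (Nat.le_self_pow two_ne_zero n)
  have hs' : Summable fun n : ℕ ↦ x ^ (n + 1) ^ 2 :=
    (summable_nat_add_iff (f := fun n : ℕ ↦ x ^ n ^ 2) 1).mpr hs
  have natAbs_neg (n : ℕ) : (-((n : ℤ) + 1)).natAbs = n + 1 := by omega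
  have h := tsum_of_nat_of_neg_add_one (f := fun n : ℤ ↦ x ^ n.natAbs ^ 2) (by simpa using hs)
    (by simpa only [natAbs_neg] using hs')
  simp only [natAbs_neg, Int.natAbs_natCast] at h
  rw [hs.tsum_eq_zero_add] at h
  have hφ : ramanujanPhi x - 1 = 2 * ∑' n : ℕ, x ^ (n + 1) ^ 2 := by
    rw [ramanujanPhi, h]
    ring
  rw [hφ]
  exact hs'.hasSum.mul_left 2

theorem one_add_two_mul_le_ramanujanPhi {x : ℝ} (hx0 : 0 ≤ x) (hx1 : x < 1) :
    1 + 2 * x ≤ ramanujanPhi x := by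
  have h := le_hasSum (hasSum_ramanujanPhi (by rwa [abs_of_nonneg hx0])) 0
    fun n _ ↦ by positivity
  rw [zero_add, one_pow, pow_one] at h
  linarith

theorem one_add_eight_mul_le_ramanujanPhi_pow_four {x : ℝ} (hx0 : 0 ≤ x) (hx1 : x < 1) :
    1 + 8 * x ≤ ramanujanPhi x ^ 4 :=
  calc
    1 + 8 * x = 1 + (4 : ℕ) * (2 * x) := by push_cast; ring
    _ ≤ (1 + 2 * x) ^ 4 := one_add_mul_le_pow (by linarith) 4
    _ ≤ ramanujanPhi x ^ 4 := by
      gcongr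
      exact one_add_two_mul_le_ramanujanPhi hx0 hx1

theorem two_le_ramanujanPhi_add {x : ℝ} (hx : |x| < 1) :
    2 ≤ ramanujanPhi x + ramanujanPhi (-x) := by
  have h := (hasSum_ramanujanPhi hx).add (hasSum_ramanujanPhi (by rwa [abs_neg]))
  have hnonneg (n : ℕ) : 0 ≤ 2 * x ^ (n + 1) ^ 2 + 2 * (-x) ^ (n + 1) ^ 2 := by
    rcases ((n + 1) ^ 2).even_or_odd with hn | hn
    · rw [hn.neg_pow]
      linarith [hn.pow_nonneg x]
    · rw [hn.neg_pow]
      linarith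
  linarith [h.nonneg hnonneg]

theorem abs_ramanujanPhi_sub_le {x : ℝ} (hx : |x| < 1) :
    |ramanujanPhi x - (1 + 2 * x)| ≤ 2 * |x| ^ 4 / (1 - |x| ^ 3) := by
  have hbound (n : ℕ) : ‖2 * x ^ (n + 1) ^ 2‖ ≤ 2 * |x| * (|x| ^ 3) ^ n := by
    rw [norm_mul, norm_pow, Real.norm_eq_abs, Real.norm_eq_abs, abs_two, ← pow_mul, mul_assoc,
      ← pow_succ']
    gcongr 2 * ?_
    exact pow_le_pow_of_le_one (abs_nonneg x) hx.le
      (by linarith [Nat.le_self_pow two_ne_zero n, add_sq n 1])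
  have h := norm_sub_le_of_geometric_bound_of_hasSum
    (pow_lt_one₀ (abs_nonneg x) hx three_ne_zero) hbound (hasSum_ramanujanPhi hx) 1
  rw [sum_range_one, zero_add, one_pow, pow_one, pow_one, Real.norm_eq_abs, abs_sub_comm,
    mul_assoc, ← pow_succ', sub_sub] at h
  exact h

theorem abs_ramanujanPhi_neg_sub_le {x : ℝ} (hx0 : 0 ≤ x) (hx1 : x ≤ 1 / 4) :
    |ramanujanPhi (-x) - (1 - 2 * x)| ≤ x ^ 2 / 4 := by
  have hx : |-x| < 1 := by rw [abs_neg, abs_of_nonneg hx0]; linarith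
  have h := abs_ramanujanPhi_sub_le hx
  have hx3 : x ^ 3 ≤ 1 / 64 := (pow_le_pow_left₀ hx0 hx1 3).trans_eq (by norm_num)
  rw [abs_neg, abs_of_nonneg hx0, mul_neg, ← sub_eq_add_neg] at h
  refine h.trans ?_
  rw [div_le_iff₀ (by linarith)]
  nlinarith [mul_nonneg (sq_nonneg x) (sub_nonneg.mpr hx3),
    mul_nonneg (sq_nonneg x) (sub_nonneg.mpr (pow_le_pow_left₀ hx0 hx1 2))]

theorem ramanujanPhi_neg_pos {x : ℝ} (hx0 : 0 ≤ x) (hx1 : x ≤ 1 / 4) : 0 < ramanujanPhi (-x) := by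
  nlinarith [(abs_le.mp (abs_ramanujanPhi_neg_sub_le hx0 hx1)).1]

theorem one_add_two_mul_mul_ramanujanPhi_neg_le_one {x : ℝ} (hx0 : 0 ≤ x) (hx1 : x ≤ 1 / 4) :
    (1 + 2 * x) * ramanujanPhi (-x) ≤ 1 := by
  have h := (abs_le.mp (abs_ramanujanPhi_neg_sub_le hx0 hx1)).2
  calc
    (1 + 2 * x) * ramanujanPhi (-x) ≤ (1 + 2 * x) * (1 - 2 * x + x ^ 2 / 4) := by
      gcongr
      linarith
    _ ≤ 1 := by nlinarith [mul_nonneg (sq_nonneg x) (sub_nonneg.mpr hx1)]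

theorem one_add_mul_ramanujanPhi_neg_pow_eight_le_one {x : ℝ} (hx0 : 0 ≤ x) (hx1 : x ≤ 1 / 4) :
    (1 + 16 * x) * ramanujanPhi (-x) ^ 8 ≤ 1 := by
  have hφ := ramanujanPhi_neg_pos hx0 hx1
  calc
    (1 + 16 * x) * ramanujanPhi (-x) ^ 8 = (1 + (8 : ℕ) * (2 * x)) * ramanujanPhi (-x) ^ 8 := by
      push_cast
      ring
    _ ≤ (1 + 2 * x) ^ 8 * ramanujanPhi (-x) ^ 8 := by
      gcongr
      exact one_add_mul_le_pow (by linarith) 8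
    _ = ((1 + 2 * x) * ramanujanPhi (-x)) ^ 8 := (mul_pow _ _ _).symm
    _ ≤ 1 := pow_le_one₀ (by positivity) (one_add_two_mul_mul_ramanujanPhi_neg_le_one hx0 hx1)

theorem one_le_oblongTheta {x : ℝ} (hx0 : 0 ≤ x) (hx1 : x < 1) : 1 ≤ oblongTheta x := by
  simpa [oblongTheta] using (summable_pow_oblong hx0 hx1).le_tsum 0 fun n _ ↦ by positivity

theorem one_sub_sq_mul_oblongTheta_le_one {x : ℝ} (hx0 : 0 ≤ x) (hx1 : x < 1) :
    (1 - x ^ 2) * oblongTheta x ≤ 1 := by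
  have hx2 : x ^ 2 < 1 := pow_lt_one₀ hx0 hx1 two_ne_zero
  have h : oblongTheta x ≤ ∑' n : ℕ, (x ^ 2) ^ n := by
    refine (summable_pow_oblong hx0 hx1).tsum_le_tsum (fun n ↦ ?_)
      (summable_geometric_of_lt_one (sq_nonneg x) hx2)
    rw [← pow_mul]
    refine pow_le_pow_of_le_one hx0 hx1.le ?_
    rcases n.eq_zero_or_pos with rfl | hn <;> nlinarith
  rw [tsum_geometric_of_lt_one (sq_nonneg x) hx2] at h
  exact (le_inv_mul_iff₀ (sub_pos.mpr hx2)).mp (by rwa [mul_one])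

theorem one_sub_mul_oblongTheta_pow_four_le_one {x : ℝ} (hx0 : 0 ≤ x) (hx1 : x < 1) :
    (1 - 4 * x ^ 2) * oblongTheta x ^ 4 ≤ 1 := by
  have hψ := one_le_oblongTheta hx0 hx1
  have hx2 : x ^ 2 < 1 := pow_lt_one₀ hx0 hx1 two_ne_zero
  have bernoulli : 1 - 4 * x ^ 2 ≤ (1 - x ^ 2) ^ 4 := by
    simpa [sub_eq_add_neg] using one_add_mul_le_pow (a := -x ^ 2) (by linarith) 4
  calc
    (1 - 4 * x ^ 2) * oblongTheta x ^ 4 ≤ (1 - x ^ 2) ^ 4 * oblongTheta x ^ 4 := by gcongr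
    _ = ((1 - x ^ 2) * oblongTheta x) ^ 4 := (mul_pow _ _ _).symm
    _ ≤ 1 := pow_le_one₀ (mul_nonneg (by linarith) (by linarith))
      (one_sub_sq_mul_oblongTheta_le_one hx0 hx1)

end

section

open scoped Real

/-! ### Estimates for small `q` -/


theorem sigmaSeries_le_of_le (k : ℕ) {q r : ℝ} (hq0 : 0 ≤ q) (hqr : q ≤ r)
    (hr : 2 ^ (k + 1) * r < 1) :
    sigmaSeries k q ≤
      q + (1 + 2 ^ k + (2 ^ (k + 1)) ^ 2 * r / (1 - 2 ^ (k + 1) * r)) * q ^ 2 := by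
  have hr0 : 0 ≤ r := hq0.trans hqr
  have hqr' : 2 ^ (k + 1) * q ≤ 2 ^ (k + 1) * r := by gcongr
  calc
    sigmaSeries k q ≤ q + (1 + 2 ^ k) * q ^ 2 +
        q * (2 ^ (k + 1) * q) ^ 2 / (1 - 2 ^ (k + 1) * q) :=
      sigmaSeries_upper_bound k hq0 (hqr'.trans_lt hr)
    _ ≤ q + (1 + 2 ^ k) * q ^ 2 + r * (2 ^ (k + 1) * q) ^ 2 / (1 - 2 ^ (k + 1) * r) := by gcongr
    _ = q + (1 + 2 ^ k + (2 ^ (k + 1)) ^ 2 * r / (1 - 2 ^ (k + 1) * r)) * q ^ 2 := by ring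

theorem sigmaSeries_one_mem_Icc {q : ℝ} (hq0 : 0 ≤ q) (hq1 : q ≤ 1 / 400) :
    sigmaSeries 1 q ∈ Set.Icc (q + 3 * q ^ 2) (q + 3.05 * q ^ 2) :=
  ⟨(sigmaSeries_lower_bound 1 hq0 (by norm_num; linarith)).trans' (by norm_num),
    (sigmaSeries_le_of_le 1 hq0 hq1 (by norm_num)).trans (by gcongr; norm_num)⟩

theorem sigmaSeries_three_mem_Icc {q : ℝ} (hq0 : 0 ≤ q) (hq1 : q ≤ 1 / 400) :
    sigmaSeries 3 q ∈ Set.Icc (q + 9 * q ^ 2) (q + 9.7 * q ^ 2) :=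
  ⟨(sigmaSeries_lower_bound 3 hq0 (by norm_num; linarith)).trans' (by norm_num),
    (sigmaSeries_le_of_le 3 hq0 hq1 (by norm_num)).trans (by gcongr; norm_num)⟩

theorem sigmaSeries_five_mem_Icc {q : ℝ} (hq0 : 0 ≤ q) (hq1 : q ≤ 1 / 400) :
    sigmaSeries 5 q ∈ Set.Icc (q + 33 * q ^ 2) (q + 45.3 * q ^ 2) :=
  ⟨(sigmaSeries_lower_bound 5 hq0 (by norm_num; linarith)).trans' (by norm_num),
    (sigmaSeries_le_of_le 5 hq0 hq1 (by norm_num)).trans (by gcongr; norm_num)⟩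

theorem qE4_mem_Icc {q : ℝ} (hq0 : 0 ≤ q) (hq1 : q ≤ 1 / 400) :
    qE4 q ∈ Set.Icc 1 (1 + 250 * q) := by
  obtain ⟨hlower, hupper⟩ := sigmaSeries_three_mem_Icc hq0 hq1
  rw [qE4]
  constructor <;> nlinarith

theorem qRamanujan_mem_Icc {q : ℝ} (hq0 : 0 ≤ q) (hq1 : q ≤ 1 / 400) :
    qRamanujan q ∈ Set.Icc (720 * q) (780 * q) := by
  obtain ⟨ha, ha'⟩ := sigmaSeries_one_mem_Icc hq0 hq1
  obtain ⟨hb, hb'⟩ := sigmaSeries_three_mem_Icc hq0 hq1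
  obtain ⟨hc, hc'⟩ := sigmaSeries_five_mem_Icc hq0 hq1
  rw [qRamanujan, qE2, qE4, qE6]
  set a := sigmaSeries 1 q
  set b := sigmaSeries 3 q
  set c := sigmaSeries 5 q
  have expand : (1 - 24 * a) * (1 + 240 * b) - (1 - 504 * c) =
      240 * b - 24 * a - 5760 * (a * b) + 504 * c := by ring
  have hqq : q ^ 2 ≤ q / 400 := by nlinarith
  have hb0 : 0 ≤ b := by nlinarith
  have hab : q ^ 2 ≤ a * b := by nlinarith
  have hab' : a * b ≤ 1.1 * q ^ 2 := by
    have ha1 : a ≤ 1.01 * q := by linarith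
    have hb1 : b ≤ 1.03 * q := by linarith
    nlinarith [mul_le_mul ha1 hb1 hb0 (by linarith)]
  rw [expand]
  constructor <;> linarith

theorem qDisc_lower_bound {q : ℝ} (hq0 : 0 ≤ q) (hq1 : q ≤ 1 / 400) :
    1728 * q * (1 - 40 * q) ≤ qDisc q := by
  obtain ⟨hb, -⟩ := sigmaSeries_three_mem_Icc hq0 hq1
  obtain ⟨hc, hc'⟩ := sigmaSeries_five_mem_Icc hq0 hq1
  rw [qDisc, qE4, qE6]
  set b := sigmaSeries 3 q
  set c := sigmaSeries 5 q
  have expand : (1 + 240 * b) ^ 3 - (1 - 504 * c) ^ 2 =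
      720 * b + 1008 * c + 172800 * b ^ 2 - 254016 * c ^ 2 + 13824000 * b ^ 3 := by ring
  have hq3 : 0 ≤ q ^ 3 := by positivity
  have hq32 : q ^ 3 ≤ q ^ 2 / 400 := by nlinarith [sq_nonneg q]
  have hqb : q ≤ b := by nlinarith
  have hb2 : q ^ 2 + 18 * q ^ 3 ≤ b ^ 2 :=
    calc
      q ^ 2 + 18 * q ^ 3 ≤ (q + 9 * q ^ 2) ^ 2 := by nlinarith [sq_nonneg (q ^ 2)]
      _ ≤ b ^ 2 := by gcongr
  have hb3 : q ^ 3 ≤ b ^ 3 := by gcongr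
  have hc2 : c ^ 2 ≤ q ^ 2 + 96 * q ^ 3 :=
    calc
      c ^ 2 ≤ (q + 45.3 * q ^ 2) ^ 2 := by
        gcongr
        nlinarith
      _ ≤ q ^ 2 + 96 * q ^ 3 := by nlinarith
  rw [expand]
  linarith

end

section

open scoped Real

/-! ### The two regimes `t ≥ 1` and `t ≤ 1` -/

theorem mul_nome_le {t : ℝ} (ht : 1 ≤ t) : t * nome t ≤ 1 / 20 := by
  have exp_three : 20 ≤ Real.exp 3 := by
    rw [← mul_one 3, ← Nat.cast_ofNat (R := ℝ) (n := 3), Real.exp_nat_mul]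
    calc
      (20 : ℝ) ≤ 2.7182818283 ^ 3 := by norm_num
      _ ≤ Real.exp 1 ^ 3 := by
        gcongr
        exact Real.exp_one_gt_d9.le
  have le_exp : 20 * t ≤ Real.exp (π * t) :=
    calc
      20 * t ≤ 20 * (3 * (t - 1) + 1) := by linarith
      _ ≤ Real.exp 3 * Real.exp (3 * (t - 1)) := by
        gcongr
        exact Real.add_one_le_exp _
      _ = Real.exp (3 * t) := by rw [← Real.exp_add]; ring_nf
      _ ≤ Real.exp (π * t) := by
        gcongr
        exact Real.pi_gt_three.le
  rw [nome, neg_mul, Real.exp_neg, ← div_eq_mul_inv, div_le_iff₀ (Real.exp_pos _)]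
  linarith

theorem nome_le {t : ℝ} (ht : 1 ≤ t) : nome t ≤ 1 / 20 :=
  (le_mul_of_one_le_left (nome_pos t).le ht).trans (mul_nome_le ht)

theorem nomePsiI_lower_bound {p : ℝ} (hp0 : 0 < p) (hp1 : p ≤ 1 / 20) :
    (1 - 4 * p ^ 2) ^ 2 / p ^ 2 - 105 ≤ nomePsiI p := by
  have hψ1 := one_le_oblongTheta hp0.le (by linarith)
  have hψ := one_sub_mul_oblongTheta_pow_four_le_one hp0.le (by linarith)
  have hφ := one_add_two_mul_le_ramanujanPhi hp0.le (by linarith)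
  have hφφ := two_le_ramanujanPhi_add (abs_lt.mpr ⟨by linarith, by linarith⟩ : |p| < 1)
  rw [nomePsiI]
  set a := ramanujanPhi p
  set b := ramanujanPhi (-p)
  set w := oblongTheta p ^ 4
  have hw1 : 1 ≤ w := one_le_pow₀ hψ1
  have hab : 2 ≤ a ^ 4 + b ^ 4 := by
    have h : (a + b) ^ 4 ≤ 2 ^ 3 * (a ^ 4 + b ^ 4) := Even.add_pow_le (by decide)
    have h' : (2 : ℝ) ^ 4 ≤ (a + b) ^ 4 := by gcongr
    linarith
  have main_term : (1 - 4 * p ^ 2) ^ 2 / p ^ 2 ≤ 128 * (a ^ 4 + b ^ 4) / (16 * p * w) ^ 2 := by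
    have hp2 : 0 ≤ 1 - 4 * p ^ 2 := by nlinarith
    rw [div_le_div_iff₀ (by positivity) (by positivity)]
    calc
      (1 - 4 * p ^ 2) ^ 2 * (16 * p * w) ^ 2 = 256 * p ^ 2 * ((1 - 4 * p ^ 2) * w) ^ 2 := by ring
      _ ≤ 256 * p ^ 2 * 1 := by
        gcongr
        exact pow_le_one₀ (by positivity) hψ
      _ ≤ 128 * (a ^ 4 + b ^ 4) * p ^ 2 := by nlinarith [sq_nonneg p]
  have remainder : -105 ≤ 128 * (b ^ 4 - 16 * p * w) / a ^ 8 := by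
    have ha : 1 ≤ a ^ 8 := one_le_pow₀ (by linarith)
    have hw : 16 * p * w ≤ 0.82 := by nlinarith
    rw [le_div_iff₀ (by positivity)]
    nlinarith [pow_nonneg (sq_nonneg b) 2]
  linarith

theorem abs_qE4_sub_mul_qRamanujan_le {q t : ℝ} (hq0 : 0 < q) (hq1 : q ≤ 1 / 400) (ht : 1 ≤ t)
    (htq : t * q ≤ 1 / 400) : |qE4 q - π / 6 * t * qRamanujan q| ≤ 1 - 100 * q := by
  obtain ⟨hE, hE'⟩ := qE4_mem_Icc hq0.le hq1
  obtain ⟨hK, hK'⟩ := qRamanujan_mem_Icc hq0.le hq1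
  have lower : 3.14 / 6 * 1 * (720 * q) ≤ π / 6 * t * qRamanujan q := by
    gcongr
    exact Real.pi_gt_d2.le
  have upper : π / 6 * t * qRamanujan q ≤ 3.15 / 6 * t * (780 * q) := by
    have hK0 : 0 ≤ qRamanujan q := hK.trans' (by positivity)
    gcongr
    exact Real.pi_lt_d2.le
  rw [abs_le]
  constructor <;> linarith

theorem nomePsiI_sub_pos {t : ℝ} (ht : 1 ≤ t) :
    0 < nomePsiI (nome t) - 1728 * (qE4 (nome t ^ 2) - π / 6 * t * qRamanujan (nome t ^ 2)) ^ 2 /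
      qDisc (nome t ^ 2) := by
  have hp0 := nome_pos t
  have hp1 := nome_le ht
  have htp := mul_nome_le ht
  have hψ := nomePsiI_lower_bound hp0 hp1
  have hq0 : 0 < nome t ^ 2 := by positivity
  have hq1 : nome t ^ 2 ≤ 1 / 400 := by nlinarith
  have htq : t * nome t ^ 2 ≤ 1 / 400 := by nlinarith
  set q := nome t ^ 2
  have hu := abs_qE4_sub_mul_qRamanujan_le hq0 hq1 ht htq
  have hD := qDisc_lower_bound hq0.le hq1
  set u := qE4 q - π / 6 * t * qRamanujan q
  have hq40 : 0 < 1 - 40 * q := by linarith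
  have quotient_le : 1728 * u ^ 2 / qDisc q ≤ (1 - 100 * q) ^ 2 / (q * (1 - 40 * q)) :=
    calc
      1728 * u ^ 2 / qDisc q ≤ 1728 * (1 - 100 * q) ^ 2 / (1728 * q * (1 - 40 * q)) := by
        gcongr 1728 * ?_ / ?_
        exact sq_le_sq' (abs_le.mp hu).1 (abs_le.mp hu).2
      _ = (1 - 100 * q) ^ 2 / (q * (1 - 40 * q)) := by
        rw [mul_assoc, mul_div_mul_left _ _ (by norm_num)]
  have compare : (1 - 100 * q) ^ 2 / (q * (1 - 40 * q)) < (1 - 4 * q) ^ 2 / q - 105 := by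
    rw [lt_sub_iff_add_lt, div_add' _ _ _ (by positivity), div_lt_div_iff₀ (by positivity) hq0]
    have h : (1 - 100 * q) ^ 2 + 105 * (q * (1 - 40 * q)) < (1 - 4 * q) ^ 2 * (1 - 40 * q) := by
      nlinarith [pow_le_pow_left₀ hq0.le hq1 2]
    nlinarith
  linarith

theorem nomePsiS_upper_bound {p : ℝ} (hp0 : 0 < p) (hp1 : p ≤ 1 / 20) :
    nomePsiS p ≤ -128 * (56 * p + 384 * p ^ 2) := by
  have hψ1 := one_le_oblongTheta hp0.le (by linarith)
  have ha := one_add_two_mul_le_ramanujanPhi hp0.le (by linarith)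
  have ha4 := one_add_eight_mul_le_ramanujanPhi_pow_four hp0.le (by linarith)
  have hb := ramanujanPhi_neg_pos hp0.le (by linarith)
  have hb1 := one_add_two_mul_mul_ramanujanPhi_neg_le_one hp0.le (by linarith)
  have hb8 := one_add_mul_ramanujanPhi_neg_pow_eight_le_one hp0.le (by linarith)
  rw [nomePsiS]
  set a := ramanujanPhi p
  set b := ramanujanPhi (-p)
  have hc : 16 * p ≤ 16 * p * oblongTheta p ^ 4 :=
    le_mul_of_one_le_right (by positivity) (one_le_pow₀ hψ1)
  set c := 16 * p * oblongTheta p ^ 4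
  have main_term : (1 + 24 * p) * (1 + 16 * p) ≤ (a ^ 4 + c) / b ^ 8 := by
    rw [le_div_iff₀ (by positivity), mul_assoc]
    calc
      (1 + 24 * p) * ((1 + 16 * p) * b ^ 8) ≤ (1 + 24 * p) * 1 := by gcongr
      _ ≤ a ^ 4 + c := by linarith
  have remainder : 16 * p - 1 ≤ (c - b ^ 4) / a ^ 8 := by
    have ha8 : 1 ≤ a ^ 8 := one_le_pow₀ (by linarith)
    have hb4 : b ^ 4 ≤ 1 := pow_le_one₀ hb.le (by nlinarith)
    rw [le_div_iff₀ (by positivity)]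
    nlinarith
  calc
    -128 * (a ^ 4 + c) / b ^ 8 - 128 * (c - b ^ 4) / a ^ 8 =
        -128 * ((a ^ 4 + c) / b ^ 8 + (c - b ^ 4) / a ^ 8) := by ring
    _ ≤ -128 * (56 * p + 384 * p ^ 2) := by linarith

theorem qRamanujan_sq_div_qDisc_le {q : ℝ} (hq0 : 0 < q) (hq1 : q ≤ 1 / 400) :
    1728 * qRamanujan q ^ 2 / qDisc q ≤ 676000 * q := by
  obtain ⟨hK, hK'⟩ := qRamanujan_mem_Icc hq0.le hq1
  have hK0 : 0 ≤ qRamanujan q := hK.trans' (by positivity)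
  calc
    1728 * qRamanujan q ^ 2 / qDisc q ≤
        1728 * (780 * q) ^ 2 / (1728 * q * (1 - 40 * (1 / 400))) := by
      gcongr
      refine (qDisc_lower_bound hq0.le hq1).trans' ?_
      gcongr
    _ = 676000 * q := by
      field_simp
      norm_num

theorem neg_nomePsiS_sub_pos {p : ℝ} (hp0 : 0 < p) (hp1 : p ≤ 1 / 20) :
    0 < -36 / π ^ 2 * nomePsiS p - 1728 * qRamanujan (p ^ 2) ^ 2 / qDisc (p ^ 2) := by
  have hψ := nomePsiS_upper_bound hp0 hp1
  have hK := qRamanujan_sq_div_qDisc_le (q := p ^ 2) (by positivity) (by nlinarith)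
  have hπ : 3.6 ≤ 36 / π ^ 2 := by
    rw [le_div_iff₀ (by positivity)]
    nlinarith [Real.pi_pos, Real.pi_lt_d2]
  have psi_term : 3.6 * (128 * (56 * p + 384 * p ^ 2)) ≤ 36 / π ^ 2 * -nomePsiS p := by
    gcongr
    linarith
  have compare : 676000 * p ^ 2 < 3.6 * (128 * (56 * p + 384 * p ^ 2)) := by nlinarith
  have neg_swap : -36 / π ^ 2 * nomePsiS p = 36 / π ^ 2 * -nomePsiS p := by ring
  linarith

end

/-- The function `B(t) = −t²φ₀(i/t) + (36/π²)ψ_I(it)` is real-valued and satisfies `B(t) > 0`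
for every `t ∈ (0, ∞)`. -/
theorem Bfn_pos (t : ℝ) (ht : 0 < t) : (Bfn t).im = 0 ∧ 0 < (Bfn t).re := by
  suffices h : ∃ x : ℝ, 0 < x ∧ Bfn t = x by
    obtain ⟨x, hx, hB⟩ := h
    exact ⟨by rw [hB, Complex.ofReal_im], by rwa [hB, Complex.ofReal_re]⟩
  rcases le_total 1 t with ht1 | ht1
  · exact ⟨_, mul_pos (by positivity) (nomePsiI_sub_pos ht1), Bfn_eq_ofReal ht⟩
  · have hs : 0 < 1 / t := by positivity
    have hs1 : 1 ≤ 1 / t := one_le_one_div ht ht1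
    have hB := Bfn_one_div_eq_ofReal hs
    rw [one_div_one_div] at hB
    exact ⟨_, div_pos (neg_nomePsiS_sub_pos (nome_pos _) (nome_le hs1)) (by positivity), hB⟩
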